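/- Let P be a finite simple 4-regular bipartite graph with bipartition V(P) = V1 ∪ V2 and let c : E(P) → {1,2,3,4} be a proper edge-coloring of P. In the associated 4-regular graph tiling instance with set W = (V(P) × {1,2,3,4}) ∪ E(P) and involutions U, D, L, R as defined in the construction, the set W admits a partition W = W1 ∪ W2 such that each of the four involutions U, D, L, R maps W1 onto W2 (hence the underlying labeled 4-regular graph of the tiling instance is bipartite). Explicitly, one may take W1 = {(w,i) : w ∈ V(P), i ∈ {1,3}} ∪ {e ∈ E(P) : c(e) is even}. -/

import Mathlib

/-!
STATEMENT 12: Let P be a finite simple 4-regular bipartite graph with bipartition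
V(P) = V1 ∪ V2 and let c : E(P) → {1,2,3,4} be a proper edge-coloring of P.  In the
associated 4-regular graph tiling instance with set W = (V(P) × {1,2,3,4}) ∪ E(P) and
involutions U, D, L, R as defined in the construction, the set W admits a partition
W = W1 ∪ W2 such that each of the four involutions U, D, L, R maps W1 onto W2 (hence the
underlying labeled 4-regular graph of the tiling instance is bipartite).  Explicitly, one
may take W1 = {(w,i) : w ∈ V(P), i ∈ {1,3}} ∪ {e ∈ E(P) : c(e) is even}.

Conventions: the four colors/indices {1,2,3,4} are encoded by `Fin 4` (so 1↦0, 2↦1, 3↦2,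
4↦3); hence the indices i ∈ {1,3} become `Fin 4` values {0,2}, and "c(e) is even" (colors
2 and 4) becomes `(c e).val` odd (values {1,3}).  We take W2 = W1ᶜ (so that W = W1 ∪ W2 is
automatically a partition), and "each involution maps W1 onto W2" is stated as the image
of W1 under each involution being W1ᶜ.
-/

/-- `f` is a fixed-point-free involution. -/
def FPFInvolution {W : Type} (f : W → W) : Prop :=
  Function.Involutive f ∧ ∀ w, f w ≠ w

/-- The edge of `P` corresponding to a pair of adjacent vertices. -/
def edgeOf {V : Type} {P : SimpleGraph V} {u v : V} (h : P.Adj u v) :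
    {e : Sym2 V // e ∈ P.edgeSet} :=
  ⟨s(u, v), (SimpleGraph.mem_edgeSet P).mpr h⟩

/-- The explicit part `W1` of the bipartition of the ground set of the tiling instance:
all pairs (w,i) with i ∈ {1,3} (0-indexed: {0,2}), and all edges of even color
(0-indexed: odd value). -/
def tilingW1 {V : Type} (P : SimpleGraph V) (c : {e : Sym2 V // e ∈ P.edgeSet} → Fin 4) :
    Set ((V × Fin 4) ⊕ {e : Sym2 V // e ∈ P.edgeSet}) :=
  {w | match w with
       | .inl (_, i) => i = 0 ∨ i = 2
       | .inr e => (c e).val % 2 = 1}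

/-!
Since each of the four maps `f` is an involution, `f '' W1 = W1ᶜ` as soon as `f` always changes
membership in `W1`. On the side of `P` where `f` permutes the copies `(x, i)` of a vertex, it
moves `i` to a cyclically adjacent index, which has the other parity. Everywhere else `f`
exchanges an edge `e` with some `(x, c e)`, and `W1` uses opposite parities for vertex copies and
for edges. The only input from graph theory is that these two cases cover every `(x, i)`: the
four edges at `x` have distinct colors, so every color occurs at `x` (`exists_adj_color`).
-/

theorem edgeOf_symm {V : Type} {P : SimpleGraph V} {u v : V} (h : P.Adj u v) :
    edgeOf h.symm = edgeOf h :=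
  Subtype.ext Sym2.eq_swap

/-- In a 4-regular graph with a proper 4-edge-coloring every color occurs at every vertex: the
coloring is injective on the four edges at `x`, hence surjective. -/
theorem exists_adj_color {V : Type} [Fintype V] (P : SimpleGraph V) [DecidableRel P.Adj]
    (hreg : P.IsRegularOfDegree 4)
    (c : {e : Sym2 V // e ∈ P.edgeSet} → Fin 4)
    (hproper : ∀ e f : {e : Sym2 V // e ∈ P.edgeSet}, e ≠ f →
      (∃ x : V, x ∈ (e : Sym2 V) ∧ x ∈ (f : Sym2 V)) → c e ≠ c f)
    (x : V) (i : Fin 4) : ∃ (y : V) (h : P.Adj x y), c (edgeOf h) = i := by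
  let g : P.neighborSet x → Fin 4 := fun y => c (edgeOf y.2)
  have hinj : Function.Injective g := by
    intro y z hyz
    by_contra hne
    refine hproper (edgeOf y.2) (edgeOf z.2) ?_
      ⟨x, Sym2.mem_mk_left _ _, Sym2.mem_mk_left _ _⟩ hyz
    intro he
    exact hne (Subtype.ext (Sym2.congr_right.mp (congrArg Subtype.val he)))
  have hcard : Fintype.card (P.neighborSet x) = Fintype.card (Fin 4) := by
    rw [SimpleGraph.card_neighborSet_eq_degree, hreg x, Fintype.card_fin]
  obtain ⟨y, hy⟩ := ((Fintype.bijective_iff_injective_and_card g).mpr ⟨hinj, hcard⟩).2 i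
  exact ⟨y, y.2, hy⟩

/-- The common shape of the four involutions: on copies of vertices in `A` the index changes
parity, and copies of vertices in `B` are exchanged with edges, the index being the color. -/
theorem image_tilingW1 {V : Type} (P : SimpleGraph V)
    (c : {e : Sym2 V // e ∈ P.edgeSet} → Fin 4) (A B : Set V) (hAB : ∀ x, x ∈ A ∨ x ∈ B)
    (f : (V × Fin 4) ⊕ {e : Sym2 V // e ∈ P.edgeSet} →
         (V × Fin 4) ⊕ {e : Sym2 V // e ∈ P.edgeSet})
    (hf : Function.Involutive f)
    (hA : ∀ x ∈ A, ∀ i, ∃ j, f (.inl (x, i)) = .inl (x, j) ∧ (i.val % 2 = 0 ↔ j.val % 2 = 1))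
    (hB : ∀ x ∈ B, ∀ i, ∃ e, c e = i ∧ f (.inl (x, i)) = .inr e)
    (hE : ∀ e, ∃ x, f (.inr e) = .inl (x, c e)) :
    f '' tilingW1 P c = (tilingW1 P c)ᶜ := by
  have hinl : ∀ (x : V) (i : Fin 4),
      (Sum.inl (x, i) : (V × Fin 4) ⊕ {e : Sym2 V // e ∈ P.edgeSet}) ∈ tilingW1 P c ↔
        i.val % 2 = 0 := by
    intro x i
    change (i = 0 ∨ i = 2) ↔ _
    revert i
    decide
  have hinr : ∀ e : {e : Sym2 V // e ∈ P.edgeSet},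
      (Sum.inr e : (V × Fin 4) ⊕ {e : Sym2 V // e ∈ P.edgeSet}) ∈ tilingW1 P c ↔
        (c e).val % 2 = 1 := fun _ => Iff.rfl
  have key : ∀ w, f w ∈ tilingW1 P c ↔ w ∉ tilingW1 P c := by
    rintro (⟨x, i⟩ | e)
    · rcases hAB x with hx | hx
      · obtain ⟨j, hj, hij⟩ := hA x hx i
        rw [hj, hinl, hinl]
        omega
      · obtain ⟨e, he, hfe⟩ := hB x hx i
        rw [hfe, hinl, hinr, he]
        omega
    · obtain ⟨x, hx⟩ := hE e
      rw [hx, hinl, hinr]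
      omega
  ext w
  rw [Set.image_eq_preimage_of_inverse hf.leftInverse hf.rightInverse, Set.mem_preimage, key,
    Set.mem_compl_iff]

theorem statement_12 {V : Type} [Fintype V] (P : SimpleGraph V) [DecidableRel P.Adj]
    (hreg : P.IsRegularOfDegree 4)
    (V1 V2 : Set V)
    (hpart : ∀ x : V, (x ∈ V1 ∧ x ∉ V2) ∨ (x ∈ V2 ∧ x ∉ V1))
    (hbip : ∀ ⦃u v : V⦄, P.Adj u v → ¬(u ∈ V1 ∧ v ∈ V1) ∧ ¬(u ∈ V2 ∧ v ∈ V2))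
    (c : {e : Sym2 V // e ∈ P.edgeSet} → Fin 4)
    (hproper : ∀ e f : {e : Sym2 V // e ∈ P.edgeSet}, e ≠ f →
      (∃ x : V, x ∈ (e : Sym2 V) ∧ x ∈ (f : Sym2 V)) → c e ≠ c f)
    (U D L R : (V × Fin 4) ⊕ {e : Sym2 V // e ∈ P.edgeSet} →
               (V × Fin 4) ⊕ {e : Sym2 V // e ∈ P.edgeSet})
    (hU : FPFInvolution U) (hD : FPFInvolution D)
    (hL : FPFInvolution L) (hR : FPFInvolution R)
    -- for u ∈ V1, U exchanges (u,1)↔(u,2) and (u,3)↔(u,4)  (written 0-indexed):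
    (hUV1 : ∀ u ∈ V1, U (.inl (u, 0)) = .inl (u, 1) ∧ U (.inl (u, 1)) = .inl (u, 0) ∧
                      U (.inl (u, 2)) = .inl (u, 3) ∧ U (.inl (u, 3)) = .inl (u, 2))
    -- for u ∈ V1, D exchanges (u,2)↔(u,3) and (u,4)↔(u,1)  (written 0-indexed):
    (hDV1 : ∀ u ∈ V1, D (.inl (u, 1)) = .inl (u, 2) ∧ D (.inl (u, 2)) = .inl (u, 1) ∧
                      D (.inl (u, 3)) = .inl (u, 0) ∧ D (.inl (u, 0)) = .inl (u, 3))
    -- for v ∈ V2, R exchanges (v,1)↔(v,2) and (v,3)↔(v,4)  (written 0-indexed):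
    (hRV2 : ∀ v ∈ V2, R (.inl (v, 0)) = .inl (v, 1) ∧ R (.inl (v, 1)) = .inl (v, 0) ∧
                      R (.inl (v, 2)) = .inl (v, 3) ∧ R (.inl (v, 3)) = .inl (v, 2))
    -- for v ∈ V2, L exchanges (v,2)↔(v,3) and (v,4)↔(v,1)  (written 0-indexed):
    (hLV2 : ∀ v ∈ V2, L (.inl (v, 1)) = .inl (v, 2) ∧ L (.inl (v, 2)) = .inl (v, 1) ∧
                      L (.inl (v, 3)) = .inl (v, 0) ∧ L (.inl (v, 0)) = .inl (v, 3))
    -- for each edge e = uv with u ∈ V1, v ∈ V2 and color i = c(e), R and L both exchange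
    -- e ↔ (u,i), and U and D both exchange e ↔ (v,i):
    (hedge : ∀ (u v : V) (h : P.Adj u v), u ∈ V1 → v ∈ V2 →
      R (.inr (edgeOf h)) = .inl (u, c (edgeOf h)) ∧
      R (.inl (u, c (edgeOf h))) = .inr (edgeOf h) ∧
      L (.inr (edgeOf h)) = .inl (u, c (edgeOf h)) ∧
      L (.inl (u, c (edgeOf h))) = .inr (edgeOf h) ∧
      U (.inr (edgeOf h)) = .inl (v, c (edgeOf h)) ∧
      U (.inl (v, c (edgeOf h))) = .inr (edgeOf h) ∧
      D (.inr (edgeOf h)) = .inl (v, c (edgeOf h)) ∧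
      D (.inl (v, c (edgeOf h))) = .inr (edgeOf h)) :
    U '' tilingW1 P c = (tilingW1 P c)ᶜ ∧
    D '' tilingW1 P c = (tilingW1 P c)ᶜ ∧
    L '' tilingW1 P c = (tilingW1 P c)ᶜ ∧
    R '' tilingW1 P c = (tilingW1 P c)ᶜ := by
  have hcol := exists_adj_color P hreg c hproper
  have h12 : ∀ x, x ∈ V1 ∨ x ∈ V2 := fun x => (hpart x).imp And.left And.left
  have h21 : ∀ x, x ∈ V2 ∨ x ∈ V1 := fun x => (h12 x).symm
  have hends : ∀ e : {e : Sym2 V // e ∈ P.edgeSet},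
      ∃ (u v : V) (h : P.Adj u v), u ∈ V1 ∧ v ∈ V2 ∧ e = edgeOf h := by
    rintro ⟨e, he⟩
    induction e using Sym2.ind with
    | _ a b =>
      have hab : P.Adj a b := (SimpleGraph.mem_edgeSet P).mp he
      rcases h12 a with ha | ha
      · exact ⟨a, b, hab, ha, (h12 b).resolve_left fun hb => (hbip hab).1 ⟨ha, hb⟩, rfl⟩
      · exact ⟨b, a, hab.symm, (h12 b).resolve_right fun hb => (hbip hab).2 ⟨ha, hb⟩, ha,
          (edgeOf_symm hab).symm⟩
  have hcol1 : ∀ x ∈ V1, ∀ i, ∃ (y : V) (h : P.Adj x y), y ∈ V2 ∧ c (edgeOf h) = i := by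
    intro x hx i
    obtain ⟨y, h, hi⟩ := hcol x i
    exact ⟨y, h, (h12 y).resolve_left fun hy => (hbip h).1 ⟨hx, hy⟩, hi⟩
  have hcol2 : ∀ x ∈ V2, ∀ i, ∃ (y : V) (h : P.Adj y x), y ∈ V1 ∧ c (edgeOf h) = i := by
    intro x hx i
    obtain ⟨y, h, hi⟩ := hcol x i
    exact ⟨y, h.symm, (h12 y).resolve_right fun hy => (hbip h).2 ⟨hx, hy⟩,
      (congrArg c (edgeOf_symm h)).trans hi⟩
  refine ⟨image_tilingW1 P c V1 V2 h12 U hU.1 ?_ ?_ ?_,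
    image_tilingW1 P c V1 V2 h12 D hD.1 ?_ ?_ ?_,
    image_tilingW1 P c V2 V1 h21 L hL.1 ?_ ?_ ?_,
    image_tilingW1 P c V2 V1 h21 R hR.1 ?_ ?_ ?_⟩
  · intro x hx i
    obtain ⟨h0, h1, h2, h3⟩ := hUV1 x hx
    fin_cases i
    · exact ⟨1, h0, by decide⟩
    · exact ⟨0, h1, by decide⟩
    · exact ⟨3, h2, by decide⟩
    · exact ⟨2, h3, by decide⟩
  · intro x hx i
    obtain ⟨y, h, hy, rfl⟩ := hcol2 x hx i
    obtain ⟨r1, r2, l1, l2, u1, u2, d1, d2⟩ := hedge _ _ h hy hx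
    exact ⟨_, rfl, u2⟩
  · intro e
    obtain ⟨u, v, h, hu, hv, rfl⟩ := hends e
    obtain ⟨r1, r2, l1, l2, u1, u2, d1, d2⟩ := hedge _ _ h hu hv
    exact ⟨_, u1⟩
  · intro x hx i
    obtain ⟨h0, h1, h2, h3⟩ := hDV1 x hx
    fin_cases i
    · exact ⟨3, h3, by decide⟩
    · exact ⟨2, h0, by decide⟩
    · exact ⟨1, h1, by decide⟩
    · exact ⟨0, h2, by decide⟩
  · intro x hx i
    obtain ⟨y, h, hy, rfl⟩ := hcol2 x hx i
    obtain ⟨r1, r2, l1, l2, u1, u2, d1, d2⟩ := hedge _ _ h hy hx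
    exact ⟨_, rfl, d2⟩
  · intro e
    obtain ⟨u, v, h, hu, hv, rfl⟩ := hends e
    obtain ⟨r1, r2, l1, l2, u1, u2, d1, d2⟩ := hedge _ _ h hu hv
    exact ⟨_, d1⟩
  · intro x hx i
    obtain ⟨h0, h1, h2, h3⟩ := hLV2 x hx
    fin_cases i
    · exact ⟨3, h3, by decide⟩
    · exact ⟨2, h0, by decide⟩
    · exact ⟨1, h1, by decide⟩
    · exact ⟨0, h2, by decide⟩
  · intro x hx i
    obtain ⟨y, h, hy, rfl⟩ := hcol1 x hx i
    obtain ⟨r1, r2, l1, l2, u1, u2, d1, d2⟩ := hedge _ _ h hx hy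
    exact ⟨_, rfl, l2⟩
  · intro e
    obtain ⟨u, v, h, hu, hv, rfl⟩ := hends e
    obtain ⟨r1, r2, l1, l2, u1, u2, d1, d2⟩ := hedge _ _ h hu hv
    exact ⟨_, l1⟩
  · intro x hx i
    obtain ⟨h0, h1, h2, h3⟩ := hRV2 x hx
    fin_cases i
    · exact ⟨1, h0, by decide⟩
    · exact ⟨0, h1, by decide⟩
    · exact ⟨3, h2, by decide⟩
    · exact ⟨2, h3, by decide⟩
  · intro x hx i
    obtain ⟨y, h, hy, rfl⟩ := hcol1 x hx i
    obtain ⟨r1, r2, l1, l2, u1, u2, d1, d2⟩ := hedge _ _ h hx hy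
    exact ⟨_, rfl, r2⟩
  · intro e
    obtain ⟨u, v, h, hu, hv, rfl⟩ := hends e
    obtain ⟨r1, r2, l1, l2, u1, u2, d1, d2⟩ := hedge _ _ h hu hv
    exact ⟨_, r1⟩
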